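/- With two voters, the weighted deviation D_w(S, P) = Σ_k Σ_i p_i |C_i(S) - C_i(P_k)| is also minimized by returning either of the two preferred schedules P_1 or P_2. -/

import Mathlib

/-- Completion time of task `i` in schedule `S`. -/
noncomputable def completionTime {n : ℕ} (p : Fin n → ℝ) (S : Equiv.Perm (Fin n))
    (i : Fin n) : ℝ :=
  ∑ j ∈ Finset.univ.filter (fun j => S j ≤ S i), p j

/-- Weighted total deviation of `S` with respect to the two-voter profile
`{P1, P2}`: each task's deviation is multiplied by its processing time. -/
noncomputable def wdev2 {n : ℕ} (p : Fin n → ℝ) (S P1 P2 : Equiv.Perm (Fin n)) : ℝ :=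
  ∑ i, p i * (|completionTime p S i - completionTime p P1 i| +
              |completionTime p S i - completionTime p P2 i|)

/-!
Each voter's deviation is a weighted `ℓ¹` distance between vectors of completion times, so it obeys
the triangle inequality. Hence every schedule has total deviation at least the distance between the
two preferences, and each preference attains this bound because its distance to itself vanishes.
-/

section WeightedDist

variable {ι α : Type*} [Fintype ι] [PseudoMetricSpace α]

/-- The weighted `ℓ¹` distance between two families of points. With the processing times as weights,
it measures the weighted Spearman deviation of one vector of completion times from another. Weights
of any sign are allowed, so this is a pseudometric only for nonnegative `w`. -/
noncomputable def weightedDist (w : ι → ℝ) (x y : ι → α) : ℝ :=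
  ∑ i, w i * dist (x i) (y i)

theorem weightedDist_self (w : ι → ℝ) (x : ι → α) : weightedDist w x x = 0 := by
  simp [weightedDist]

theorem weightedDist_comm (w : ι → ℝ) (x y : ι → α) :
    weightedDist w x y = weightedDist w y x := by
  simp only [weightedDist, dist_comm]

theorem weightedDist_triangle_left {w : ι → ℝ} (hw : ∀ i, 0 ≤ w i) (x y z : ι → α) :
    weightedDist w x y ≤ weightedDist w z x + weightedDist w z y := by
  simp only [weightedDist, ← Finset.sum_add_distrib, ← mul_add]
  gcongr with i
  · exact hw i
  · exact dist_triangle_left (x i) (y i) (z i)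

theorem two_voters_weighted_pref_optimal_general {w : ι → ℝ} (hw : ∀ i, 0 ≤ w i)
    (x y z : ι → α) :
    weightedDist w x x + weightedDist w x y ≤ weightedDist w z x + weightedDist w z y ∧
      weightedDist w y x + weightedDist w y y ≤ weightedDist w z x + weightedDist w z y := by
  have hxy := weightedDist_triangle_left hw x y z
  rw [weightedDist_self, weightedDist_self, weightedDist_comm w y x, zero_add, add_zero]
  exact ⟨hxy, hxy⟩

end WeightedDist

theorem wdev2_eq_weightedDist_add_weightedDist {n : ℕ} (p : Fin n → ℝ)
    (S P1 P2 : Equiv.Perm (Fin n)) :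
    wdev2 p S P1 P2 =
      weightedDist p (completionTime p S) (completionTime p P1) +
        weightedDist p (completionTime p S) (completionTime p P2) := by
  simp only [wdev2, weightedDist, Real.dist_eq, mul_add, Finset.sum_add_distrib]

/-- With two voters, the weighted deviation is also minimized by returning
either of the two preferred schedules. -/
theorem two_voters_weighted_pref_optimal (n : ℕ) (p : Fin n → ℝ)
    (hp : ∀ i, 0 < p i) (P1 P2 : Equiv.Perm (Fin n)) :
    ∀ S : Equiv.Perm (Fin n),
      wdev2 p P1 P1 P2 ≤ wdev2 p S P1 P2 ∧ wdev2 p P2 P1 P2 ≤ wdev2 p S P1 P2 := by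
  intro S
  simpa only [wdev2_eq_weightedDist_add_weightedDist] using
    two_voters_weighted_pref_optimal_general (fun i => (hp i).le) (completionTime p P1)
      (completionTime p P2) (completionTime p S)
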